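/- Let X be a Banach space and Y ⊂ X a closed subspace such that the quotient space X/Y is separable. Let i : Y → X denote the inclusion and i* : X* → Y* its adjoint. Let K be a w*-compact subset of X* and let D ⊂ i*(K) be a set induced by an r-skeleton in the compact space i*(K) (with the weak* topology). If (i*)⁻¹(D) ∩ K is dense in K, then (i*)⁻¹(D) ∩ K is induced by an r-skeleton in K (with the weak* topology). -/

import Mathlib

/-!
Choose points `x n : X` whose classes are dense in `X ⧸ Y`. A functional is determined by its
restriction to `Y` together with its values on the `x n`, so `φ ↦ (i* φ, (φ (x n))ₙ)` embeds the
compact space `K` into `i*(K) × ℝ^ℕ`. The product of the given r-skeleton with the identity of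
`ℝ^ℕ` is an r-skeleton on `i*(K) × ℝ^ℕ` (`RetractionalSkeleton.prodId`) inducing `D × ℝ^ℕ`.

It remains to see that an r-skeleton `(r s)` on a Hausdorff space `P` with induced set `D` passes
to every compact `F ⊆ P` in which `D ∩ F` is dense (`isInducedByRSkeleton_preimage`). The index set
of the new skeleton is `{s | r s [F] ⊆ F}`. It is closed under suprema of increasing sequences since
`F` is closed; the point is that it is cofinal (`RetractionalSkeleton.exists_ge_mapsTo`).
Starting from `s₀`, one builds `s₀ ≤ s₁ ≤ ⋯` and countable sets `Aₙ ⊆ D ∩ F` such that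
`r sₙ [Aₙ]` is dense in the compact metrizable set `r sₙ [F]`, and `r sₙ₊₁` fixes `Aₙ`.
Let `s = sup sₙ` and let `C ⊆ F` be the closure of `⋃ Aₙ`. Then `r s` fixes `C`, and
`r sₙ [C] = r sₙ [F]` for every `n`. For `x ∈ F`, compactness yields `a ∈ C` with
`r sₙ a = r sₙ x` for all `n`, and in the limit `a = r s a = r s x`, so `r s x ∈ F`.
-/

open Filter Topology TopologicalSpace Set

universe u v

/-- A retractional skeleton in a topological space `K`: a family `r s : C(K, K)` of continuous
retractions indexed by an up-directed (nonempty) partially ordered set `Γ` such that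
(i) each `r s` has metrizable range and the net `(r s x)` converges to `x`;
(ii) `s ≤ t` implies `r s ∘ r t = r t ∘ r s = r s`;
(iii) each strictly increasing sequence has a supremum `t` and `r t x = lim_n r (f n) x`. -/
structure RetractionalSkeleton (K : Type u) [TopologicalSpace K] : Type (u + 1) where
  Γ : Type u
  [po : PartialOrder Γ]
  [ne : Nonempty Γ]
  directed : ∀ s t : Γ, ∃ w, s ≤ w ∧ t ≤ w
  r : Γ → C(K, K)
  isRetraction : ∀ s, ∀ x : K, r s (r s x) = r s x
  metrizable : ∀ s, MetrizableSpace ↥(Set.range (r s))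
  tendsto_id : ∀ x : K, Tendsto (fun s => r s x) atTop (𝓝 x)
  comp_eq_of_le : ∀ s t : Γ, s ≤ t → ∀ x : K, r s (r t x) = r s x ∧ r t (r s x) = r s x
  sup_seq : ∀ f : ℕ → Γ, StrictMono f → ∃ t : Γ, IsLUB (Set.range f) t ∧
    ∀ x : K, Tendsto (fun n => r (f n) x) atTop (𝓝 (r t x))

/-- The set `D(𝔰) = ⋃ s, r s [K]` induced by a retractional skeleton. -/
def RetractionalSkeleton.inducedSet {K : Type u} [TopologicalSpace K]
    (𝔰 : RetractionalSkeleton K) : Set K := ⋃ s, Set.range (𝔰.r s)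

/-- `D` is induced by an r-skeleton in `K`. -/
def IsInducedByRSkeleton {K : Type u} [TopologicalSpace K] (D : Set K) : Prop :=
  ∃ 𝔰 : RetractionalSkeleton K, 𝔰.inducedSet = D

/-- `K` has a retractional skeleton. -/
def HasRetractionalSkeleton (K : Type u) [TopologicalSpace K] : Prop :=
  Nonempty (RetractionalSkeleton K)

/-- The adjoint `i* : X* → Y*` of the inclusion `i : Y → X` of a subspace, acting on the
weak* duals: `φ ↦ φ ∘ i`. -/
noncomputable def restrictDual {X : Type u} [NormedAddCommGroup X] [NormedSpace ℝ X]
    (Y : Subspace ℝ X) (φ : WeakDual ℝ X) : WeakDual ℝ ↥Y :=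
  show ↥Y →L[ℝ] ℝ from (show X →L[ℝ] ℝ from φ).comp Y.subtypeL

/-! ### Countable suprema and fixed points in a skeleton -/

namespace RetractionalSkeleton

attribute [instance] RetractionalSkeleton.po RetractionalSkeleton.ne

variable {P : Type u} [TopologicalSpace P]

lemma fix_of_le (𝔰 : RetractionalSkeleton P) {s t : 𝔰.Γ} (h : s ≤ t) {a : P}
    (ha : 𝔰.r s a = a) : 𝔰.r t a = a := by
  have := (𝔰.comp_eq_of_le s t h a).2
  rwa [ha] at this

lemma mem_inducedSet_iff (𝔰 : RetractionalSkeleton P) {a : P} :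
    a ∈ 𝔰.inducedSet ↔ ∃ s, 𝔰.r s a = a := by
  simp only [inducedSet, mem_iUnion, mem_range]
  constructor
  · rintro ⟨s, y, rfl⟩
    exact ⟨s, 𝔰.isRetraction s y⟩
  · rintro ⟨s, h⟩
    exact ⟨s, a, h⟩

/-- Suprema of sequences that are only weakly increasing. Either the sequence is eventually
constant or it has a strictly increasing subsequence; convergence is recorded along a subsequence. -/
lemma exists_isLUB_of_monotone (𝔰 : RetractionalSkeleton P) (f : ℕ → 𝔰.Γ) (hf : Monotone f) :
    ∃ t, IsLUB (range f) t ∧ ∃ φ : ℕ → ℕ,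
      ∀ x, Tendsto (fun n => 𝔰.r (f (φ n)) x) atTop (𝓝 (𝔰.r t x)) := by
  by_cases h : ∃ N, ∀ n, N ≤ n → f n = f N
  · obtain ⟨N, hN⟩ := h
    refine ⟨f N, ⟨?_, fun b hb => hb ⟨N, rfl⟩⟩, fun _ => N, fun x => tendsto_const_nhds⟩
    rintro _ ⟨n, rfl⟩
    calc f n ≤ f (max N n) := hf (le_max_right _ _)
      _ = f N := hN _ (le_max_left _ _)
  · push Not at h
    choose g hg hne using h
    have hlt : ∀ n, f n < f (g n) := fun n => lt_of_le_of_ne (hf (hg n)) (hne n).symm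
    have hgt : ∀ n, n < g n := fun n => lt_of_le_of_ne (hg n) fun e => hne n (by rw [← e])
    let φ : ℕ → ℕ := fun n => g^[n] 0
    have hφ : ∀ n, φ (n + 1) = g (φ n) := fun n => Function.iterate_succ_apply' g n 0
    have hφm : StrictMono φ := strictMono_nat_of_lt_succ fun n => by rw [hφ]; exact hgt _
    obtain ⟨t, ht, hlim⟩ := 𝔰.sup_seq (fun n => f (φ n))
      (strictMono_nat_of_lt_succ fun n => by rw [hφ]; exact hlt _)
    refine ⟨t, ⟨?_, fun b hb => ht.2 ?_⟩, φ, hlim⟩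
    · rintro _ ⟨n, rfl⟩
      exact (hf (hφm.le_apply)).trans (ht.1 ⟨n, rfl⟩)
    · rintro _ ⟨n, rfl⟩
      exact hb ⟨φ n, rfl⟩

/-- Countably many points of the induced set are fixed by a common retraction. -/
lemma exists_ge_fix (𝔰 : RetractionalSkeleton P) {A : Set P} (hA : A.Countable)
    (hAD : A ⊆ 𝔰.inducedSet) (s : 𝔰.Γ) : ∃ t, s ≤ t ∧ ∀ a ∈ A, 𝔰.r t a = a := by
  rcases A.eq_empty_or_nonempty with rfl | hne
  · exact ⟨s, le_rfl, by simp⟩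
  obtain ⟨a, rfl⟩ := hA.exists_eq_range hne
  choose t ht using fun n => 𝔰.mem_inducedSet_iff.1 (hAD ⟨n, rfl⟩)
  choose w hw₁ hw₂ using 𝔰.directed
  let f : ℕ → 𝔰.Γ := fun n => Nat.rec s (fun n v => w v (t n)) n
  have hf : ∀ n, f (n + 1) = w (f n) (t n) := fun n => rfl
  obtain ⟨b, hb, -⟩ := 𝔰.exists_isLUB_of_monotone f
    (monotone_nat_of_le_succ fun n => by rw [hf]; exact hw₁ _ _)
  refine ⟨b, hb.1 ⟨0, rfl⟩, ?_⟩
  rintro _ ⟨n, rfl⟩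
  exact 𝔰.fix_of_le (((hw₂ (f n) (t n)).trans_eq (hf n).symm).trans (hb.1 ⟨n + 1, rfl⟩)) (ht n)

/-! ### Cofinality of the indices preserving a compact subset -/

variable {K : Type u} [TopologicalSpace K] [CompactSpace K]

/-- The compact set `r s [e K]` is metrizable, hence second countable, so the image of a dense
subset of `K` contains a countable dense subset of it. -/
lemma exists_countable_dense (𝔰 : RetractionalSkeleton P) {e : K → P} (he : Continuous e)
    {S : Set K} (hS : Dense S) (s : 𝔰.Γ) :
    ∃ A ⊆ S, A.Countable ∧ ∀ x, 𝔰.r s (e x) ∈ closure ((fun a => 𝔰.r s (e a)) '' A) := by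
  rcases isEmpty_or_nonempty K with _ | _
  · exact ⟨∅, empty_subset _, countable_empty, isEmptyElim⟩
  let g : K → P := fun a => 𝔰.r s (e a)
  have hg : Continuous g := (𝔰.r s).continuous.comp he
  have hsub : range g ⊆ range (𝔰.r s) := by
    rintro _ ⟨x, rfl⟩
    exact ⟨e x, rfl⟩
  have := 𝔰.metrizable s
  have : MetrizableSpace (range g) := (IsEmbedding.inclusion hsub).metrizableSpace
  have : CompactSpace (range g) := isCompact_iff_compactSpace.1 (isCompact_range hg)
  let _ := metrizableSpaceMetric (range g)
  have : SecondCountableTopology (range g) := inferInstance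
  have hd : Dense (rangeFactorization g '' S) :=
    rangeFactorization_surjective.denseRange.dense_image hg.rangeFactorization hS
  obtain ⟨B, hBS, hBc, hBd⟩ := hd.exists_countable_dense_subset
  obtain ⟨A, hAS, hAc, hAB⟩ : ∃ A ⊆ S, A.Countable ∧ rangeFactorization g '' A = B := by
    choose! k hk using hBS
    refine ⟨k '' B, ?_, hBc.image k, ?_⟩
    · rintro _ ⟨b, hb, rfl⟩
      exact (hk hb).1
    · rw [image_image]
      exact (image_congr fun b hb => (hk hb).2).trans (image_id' B)
  refine ⟨A, hAS, hAc, fun x => ?_⟩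
  have h1 : rangeFactorization g x ∈ closure B := hBd _
  have h2 := image_closure_subset_closure_image (f := Subtype.val) continuous_subtype_val
    (mem_image_of_mem _ h1)
  rw [← hAB, image_image] at h2
  exact h2

/-- The indices whose retraction maps the compact set `e K` into itself are cofinal. -/
lemma exists_ge_mapsTo [T2Space P] (𝔰 : RetractionalSkeleton P) {e : K → P} (he : Continuous e)
    (hS : Dense (e ⁻¹' 𝔰.inducedSet)) (s : 𝔰.Γ) :
    ∃ t, s ≤ t ∧ ∀ x, 𝔰.r t (e x) ∈ range e := by
  choose A hAS hAc hAd using 𝔰.exists_countable_dense he hS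
  have hN : ∀ s, ∃ t, s ≤ t ∧ ∀ a ∈ A s, 𝔰.r t (e a) = e a := fun s => by
    obtain ⟨t, ht, h⟩ := 𝔰.exists_ge_fix ((hAc s).image e) (image_subset_iff.2 (hAS s)) s
    exact ⟨t, ht, fun a ha => h _ ⟨a, ha, rfl⟩⟩
  choose N hN₁ hN₂ using hN
  let f : ℕ → 𝔰.Γ := fun n => N^[n] s
  have hf : ∀ n, f (n + 1) = N (f n) := fun n => Function.iterate_succ_apply' N n s
  have hmono : Monotone f := monotone_nat_of_le_succ fun n => by rw [hf]; exact hN₁ _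
  obtain ⟨t, ht, φ, hlim⟩ := 𝔰.exists_isLUB_of_monotone f hmono
  refine ⟨t, ht.1 ⟨0, rfl⟩, fun x => ?_⟩
  have hcont : ∀ u, Continuous fun a => 𝔰.r u (e a) := fun u => (𝔰.r u).continuous.comp he
  set C : Set K := closure (⋃ n, A (f n)) with hC
  have hfix : ∀ a ∈ C, 𝔰.r t (e a) = e a := by
    have hcl : IsClosed {a | 𝔰.r t (e a) = e a} := isClosed_eq (hcont t) he
    refine closure_minimal (iUnion_subset fun n a ha => ?_) hcl
    refine 𝔰.fix_of_le (ht.1 ⟨n + 1, rfl⟩) ?_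
    rw [hf]
    exact hN₂ _ _ ha
  let T : ℕ → Set K := fun n => C ∩ {a | 𝔰.r (f n) (e a) = 𝔰.r (f n) (e x)}
  have hTcl : ∀ n, IsClosed (T n) := fun n =>
    isClosed_closure.inter (isClosed_eq (hcont _) continuous_const)
  have hTne : ∀ n, (T n).Nonempty := fun n => by
    have hcl : IsClosed ((fun a => 𝔰.r (f n) (e a)) '' C) :=
      (isClosed_closure.isCompact.image (hcont _)).isClosed
    obtain ⟨a, haC, ha⟩ := closure_minimal
      (image_mono ((subset_iUnion (fun n => A (f n)) n).trans subset_closure)) hcl (hAd (f n) x)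
    exact ⟨a, haC, ha⟩
  have hTanti : ∀ n, T (n + 1) ⊆ T n := fun n a ⟨haC, ha⟩ => by
    refine ⟨haC, ?_⟩
    have h1 := fun y => (𝔰.comp_eq_of_le (f n) (f (n + 1)) (hmono n.le_succ) y).1
    have h2 : 𝔰.r (f (n + 1)) (e a) = 𝔰.r (f (n + 1)) (e x) := ha
    change 𝔰.r (f n) (e a) = 𝔰.r (f n) (e x)
    rw [← h1 (e a), h2, h1]
  obtain ⟨a, ha⟩ := IsCompact.nonempty_iInter_of_sequence_nonempty_isCompact_isClosed T hTanti hTne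
    (hTcl 0).isCompact hTcl
  rw [mem_iInter] at ha
  have heq : 𝔰.r t (e a) = 𝔰.r t (e x) :=
    tendsto_nhds_unique (hlim (e a)) ((hlim (e x)).congr fun n => ((ha (φ n)).2).symm)
  exact ⟨a, by rw [← heq, hfix a (ha 0).1]⟩

/-! ### Products with a metrizable space -/

/-- The product of a retractional skeleton with the identity of a metrizable space. -/
def prodId (𝔰 : RetractionalSkeleton P) (M : Type) [TopologicalSpace M] [MetrizableSpace M] :
    RetractionalSkeleton (P × M) where
  Γ := 𝔰.Γ
  directed := 𝔰.directed
  r s := (𝔰.r s).prodMap (ContinuousMap.id M)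
  isRetraction s x := Prod.ext (𝔰.isRetraction s x.1) rfl
  metrizable s := by
    have := 𝔰.metrizable s
    have h : ∀ z : range ((𝔰.r s).prodMap (ContinuousMap.id M)), z.1.1 ∈ range (𝔰.r s) := by
      rintro ⟨_, x, rfl⟩
      exact ⟨x.1, rfl⟩
    let j : range ((𝔰.r s).prodMap (ContinuousMap.id M)) → range (𝔰.r s) × M :=
      fun z => (⟨z.1.1, h z⟩, z.1.2)
    have hj : Continuous j := by fun_prop
    have hj' : IsEmbedding (Prod.map Subtype.val id ∘ j) := IsEmbedding.subtypeVal
    have hc : Continuous (Prod.map Subtype.val id : range (𝔰.r s) × M → P × M) := by fun_prop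
    exact (IsEmbedding.of_comp hj hc hj').metrizableSpace
  tendsto_id x := (𝔰.tendsto_id x.1).prodMk_nhds tendsto_const_nhds
  comp_eq_of_le s t h x :=
    ⟨Prod.ext (𝔰.comp_eq_of_le s t h x.1).1 rfl, Prod.ext (𝔰.comp_eq_of_le s t h x.1).2 rfl⟩
  sup_seq f hf := by
    obtain ⟨t, ht, h⟩ := 𝔰.sup_seq f hf
    exact ⟨t, ht, fun x => (h x.1).prodMk_nhds tendsto_const_nhds⟩

lemma mem_inducedSet_prodId (𝔰 : RetractionalSkeleton P) (M : Type) [TopologicalSpace M]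
    [MetrizableSpace M] (z : P × M) : z ∈ (𝔰.prodId M).inducedSet ↔ z.1 ∈ 𝔰.inducedSet := by
  rw [mem_inducedSet_iff, mem_inducedSet_iff]
  exact exists_congr fun s => ⟨fun h => congrArg Prod.fst h, fun h => Prod.ext h rfl⟩

/-! ### Restriction to a compact subspace -/

/-- An r-skeleton passes to a compact subspace in which its induced set is dense. -/
lemma isInducedByRSkeleton_preimage [T2Space P] (𝔰 : RetractionalSkeleton P) {e : K → P}
    (he : IsClosedEmbedding e) (hS : Dense (e ⁻¹' 𝔰.inducedSet)) :
    IsInducedByRSkeleton (e ⁻¹' 𝔰.inducedSet) := by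
  have hcof := 𝔰.exists_ge_mapsTo he.continuous hS
  let Γ' := {s : 𝔰.Γ // ∀ x, 𝔰.r s (e x) ∈ range e}
  choose ρ hρ using fun s : Γ' => s.2
  have hρc : ∀ s, Continuous (ρ s) := fun s => by
    rw [he.isEmbedding.continuous_iff]
    exact ((𝔰.r s.1).continuous.comp he.continuous).congr fun x => (hρ s x).symm
  have htop : Tendsto (Subtype.val : Γ' → 𝔰.Γ) atTop atTop := by
    refine tendsto_atTop_atTop_of_monotone (fun _ _ h => h) fun s => ?_
    obtain ⟨t, hst, ht⟩ := hcof s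
    exact ⟨⟨t, ht⟩, hst⟩
  let 𝔱 : RetractionalSkeleton K :=
    { Γ := Γ'
      ne := by
        obtain ⟨s⟩ := 𝔰.ne
        obtain ⟨t, -, ht⟩ := hcof s
        exact ⟨⟨t, ht⟩⟩
      directed := fun s t => by
        obtain ⟨w, h1, h2⟩ := 𝔰.directed s.1 t.1
        obtain ⟨w', hw, hw'⟩ := hcof w
        exact ⟨⟨w', hw'⟩, h1.trans hw, h2.trans hw⟩
      r := fun s => ⟨ρ s, hρc s⟩
      isRetraction := fun s x => he.injective <| by
        simp only [ContinuousMap.coe_mk, hρ, 𝔰.isRetraction]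
      metrizable := fun s => by
        have := 𝔰.metrizable s.1
        have hm : MapsTo e (range (ρ s)) (range (𝔰.r s.1)) := by
          rintro _ ⟨x, rfl⟩
          exact ⟨e x, (hρ s x).symm⟩
        have hj : IsEmbedding (Subtype.val ∘ hm.restrict) :=
          he.isEmbedding.comp (IsEmbedding.subtypeVal (p := (· ∈ range (ρ s))))
        exact (IsEmbedding.of_comp (he.continuous.restrict hm) continuous_subtype_val
          hj).metrizableSpace
      tendsto_id := fun x => by
        rw [he.isEmbedding.tendsto_nhds_iff]
        exact ((𝔰.tendsto_id (e x)).comp htop).congr fun s => (hρ s x).symm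
      comp_eq_of_le := fun s t h x => by
        have := 𝔰.comp_eq_of_le s.1 t.1 h (e x)
        constructor <;> apply he.injective <;> simp only [ContinuousMap.coe_mk, hρ]
        exacts [this.1, this.2]
      sup_seq := fun f hf => by
        obtain ⟨t, ht, hlim⟩ := 𝔰.sup_seq (fun n => (f n).1) hf
        have ht' : ∀ x, 𝔰.r t (e x) ∈ range e := fun x =>
          he.isClosed_range.mem_of_tendsto (hlim (e x))
            (Eventually.of_forall fun n => (f n).2 x)
        refine ⟨⟨t, ht'⟩, ⟨?_, fun b hb => ht.2 ?_⟩, fun x => ?_⟩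
        · rintro _ ⟨n, rfl⟩
          exact ht.1 ⟨n, rfl⟩
        · rintro _ ⟨n, rfl⟩
          exact hb ⟨n, rfl⟩
        · rw [he.isEmbedding.tendsto_nhds_iff]
          simp only [ContinuousMap.coe_mk, hρ]
          exact (hlim (e x)).congr fun n => (hρ (f n) x).symm }
  refine ⟨𝔱, Set.ext fun x => ?_⟩
  rw [mem_preimage, mem_inducedSet_iff, mem_inducedSet_iff]
  constructor
  · rintro ⟨s, hs⟩
    exact ⟨s.1, (hρ s x).symm.trans (congrArg e hs)⟩
  · rintro ⟨s, hs⟩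
    obtain ⟨t, hst, ht⟩ := hcof s
    exact ⟨⟨t, ht⟩, he.injective ((hρ _ x).trans (𝔰.fix_of_le hst hs))⟩

end RetractionalSkeleton

/-! ### Embedding a weak*-compact set through the restriction map -/

lemma continuous_restrictDual {X : Type u} [NormedAddCommGroup X] [NormedSpace ℝ X]
    (Y : Subspace ℝ X) : Continuous (restrictDual Y) :=
  WeakDual.continuous_of_continuous_eval fun y => WeakDual.eval_continuous (y : X)

/-- Functionals agreeing on `Y` and on lifts of a dense sequence of `X ⧸ Y` coincide. -/
lemma eq_of_restrictDual_eq {X : Type u} [NormedAddCommGroup X] [NormedSpace ℝ X]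
    (Y : Subspace ℝ X) {x : ℕ → X} (hx : DenseRange fun n => Y.mkQ (x n)) {φ ψ : WeakDual ℝ X}
    (h1 : restrictDual Y φ = restrictDual Y ψ) (h2 : ∀ n, φ (x n) = ψ (x n)) : φ = ψ := by
  have hd : Dense (Y.mkQ ⁻¹' range fun n => Y.mkQ (x n)) := hx.preimage Y.isOpenMap_mkQ
  have hfun : (φ : X → ℝ) = ψ := by
    refine Continuous.ext_on hd (map_continuous φ) (map_continuous ψ) ?_
    rintro z ⟨n, hn⟩
    have hmem : z - x n ∈ Y := (Submodule.Quotient.eq Y).1 hn.symm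
    have h3 : φ (z - x n) = ψ (z - x n) := DFunLike.congr_fun h1 (⟨z - x n, hmem⟩ : Y)
    rw [map_sub, map_sub, h2] at h3
    exact sub_left_inj.1 h3
  exact DFunLike.coe_injective hfun

/-- Let `X` be a Banach space, `Y ⊆ X` a closed subspace with `X/Y` separable, `i : Y → X`
the inclusion, `K ⊆ X*` weak*-compact, and `D ⊆ i*(K)` induced by an r-skeleton in `i*(K)`.
If `(i*)⁻¹(D) ∩ K` is dense in `K`, then `(i*)⁻¹(D) ∩ K` is induced by an r-skeleton
in `K`. -/
theorem inducedByRSkeleton_of_separable_quotient (X : Type u) [NormedAddCommGroup X]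
    [NormedSpace ℝ X] [CompleteSpace X]
    (Y : Subspace ℝ X) (hY : IsClosed (Y : Set X)) (hsep : SeparableSpace (X ⧸ Y))
    (K : Set (WeakDual ℝ X)) (hK : IsCompact K)
    (D : Set (WeakDual ℝ ↥Y)) (hDsub : D ⊆ restrictDual Y '' K)
    (hD : IsInducedByRSkeleton (Subtype.val ⁻¹' D : Set ↥(restrictDual Y '' K)))
    (hdense : Dense (Subtype.val ⁻¹' (restrictDual Y ⁻¹' D) : Set ↥K)) :
    IsInducedByRSkeleton (Subtype.val ⁻¹' (restrictDual Y ⁻¹' D) : Set ↥K) := by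
  have : CompactSpace K := isCompact_iff_compactSpace.1 hK
  obtain ⟨𝔰, h𝔰⟩ := hD
  obtain ⟨d, hd⟩ := exists_dense_seq (X ⧸ Y)
  choose x hx using fun n => Y.mkQ_surjective (d n)
  have hx' : DenseRange fun n => Y.mkQ (x n) := by
    rwa [show (fun n => Y.mkQ (x n)) = d from funext hx]
  let e : K → (restrictDual Y '' K) × (ℕ → ℝ) :=
    fun φ => (⟨restrictDual Y φ, φ, φ.2, rfl⟩, fun n => φ.1 (x n))
  have hcont : Continuous e := by
    refine (((continuous_restrictDual Y).comp continuous_subtype_val).subtype_mk _).prodMk ?_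
    exact continuous_pi fun n => (WeakDual.eval_continuous (x n)).comp continuous_subtype_val
  have hinj : Function.Injective e := fun φ ψ h => by
    refine Subtype.ext (eq_of_restrictDual_eq Y hx' ?_ ?_)
    · exact congrArg (fun z => z.1.1) h
    · exact fun n => congrFun (congrArg Prod.snd h) n
  have hpre : (Subtype.val ⁻¹' (restrictDual Y ⁻¹' D) : Set K)
      = e ⁻¹' (𝔰.prodId (ℕ → ℝ)).inducedSet := by
    ext φ
    rw [mem_preimage (f := e), 𝔰.mem_inducedSet_prodId, h𝔰]
    rfl
  rw [hpre] at hdense ⊢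
  exact (𝔰.prodId (ℕ → ℝ)).isInducedByRSkeleton_preimage (hcont.isClosedEmbedding hinj) hdense
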